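/- Let F, G : ℝ → ℝ be bounded Lebesgue-measurable functions and β_0, β_1, γ_0, γ_1 ∈ ℝ with β_1 > 0 and γ_1 > 0 (sign normalization). Let U ⊆ ℝ × (ℝ∖{0}) be a nonempty open set such that for all (z_1, z_2) ∈ U: (1/z_2) ∫_ℝ F(t) φ(t/z_2 − β_0 − β_1 z_1) dt = (1/z_2) ∫_ℝ G(t) φ(t/z_2 − γ_0 − γ_1 z_1) dt, where φ is the standard normal density. Suppose moreover there exists z_2* ≠ 0 and a nonempty open interval I with I × {z_2*} ⊆ U such that the map z_1 ↦ ∫ F(t) φ(t/z_2* − β_0 − β_1 z_1) dt restricted to I is neither an affine function z_1 ↦ K_4 z_1 + K_3 nor an exponential-affine function z_1 ↦ K_1 e^{K_2 z_1} + K_3 for any constants K_1, K_2, K_3, K_4. Then β_0 = γ_0, β_1 = γ_1, and F = G Lebesgue-almost everywhere. -/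

import Mathlib

open MeasureTheory

/-- The standard normal density `φ(t) = (2π)^{-1/2} exp(-t²/2)`. -/
noncomputable def stdNormalPDF (t : ℝ) : ℝ :=
  (Real.sqrt (2 * Real.pi))⁻¹ * Real.exp (-t ^ 2 / 2)

/-! The integral `P(z₁, z₂) = ∫ F(t) φ(t / z₂ - β₀ - β₁ z₁) dt` satisfies
`z₂ ∂P/∂z₂ = β₁⁻² ∂²P/∂z₁² + P + (β₀ / β₁ + z₁) ∂P/∂z₁`, an equation in which `F` does not appear.
If `(F, β₀, β₁)` and `(G, γ₀, γ₁)` generate the same `P`, the difference of the two equations is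
`(β₁⁻² - γ₁⁻²) ∂²P/∂z₁² + (β₀ / β₁ - γ₀ / γ₁) ∂P/∂z₁ = 0`. Unless both coefficients vanish, its
solutions are affine or exponential plus a constant, so the coefficients vanish and the parameters
agree. At fixed `z₂`, `P` is then, up to a known factor and a rescaling, the Laplace transform of
`F` times a Gaussian, which determines `F`. -/

open ProbabilityTheory Filter Set Topology

section LaplaceUniqueness

theorem measure_eq_of_mgf_id_eventuallyEq {μ ν : Measure ℝ} {x₀ : ℝ}
    (hμ : ∀ x, Integrable (fun t ↦ Real.exp (x * t)) μ)
    (hν : ∀ x, Integrable (fun t ↦ Real.exp (x * t)) ν)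
    (h : mgf id μ =ᶠ[𝓝 x₀] mgf id ν) : μ = ν := by
  have : IsFiniteMeasure μ := by simpa [integrable_const_iff_isFiniteMeasure] using hμ 0
  have : IsFiniteMeasure ν := by simpa [integrable_const_iff_isFiniteMeasure] using hν 0
  have hμ_univ : interior (integrableExpSet id μ) = univ := by
    rw [eq_univ_of_forall (s := integrableExpSet id μ) hμ, interior_univ]
  have hν_univ : interior (integrableExpSet id ν) = univ := by
    rw [eq_univ_of_forall (s := integrableExpSet id ν) hν, interior_univ]
  have mgf_eq : mgf id μ = mgf id ν :=
    (hμ_univ ▸ analyticOnNhd_mgf).eq_of_eventuallyEq (hν_univ ▸ analyticOnNhd_mgf) h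
  have zero_iff : μ = 0 ↔ ν = 0 := by
    have mass_eq : μ.real univ = ν.real univ := by simpa only [mgf_zero'] using congrFun mgf_eq 0
    rw [← Measure.measure_univ_eq_zero, ← Measure.measure_univ_eq_zero,
      ← measureReal_eq_zero_iff, ← measureReal_eq_zero_iff, mass_eq]
  have complexMGF_eqOn := eqOn_complexMGF_of_mgf' mgf_eq zero_iff
  rw [hμ_univ] at complexMGF_eqOn
  exact Measure.ext_of_complexMGF_id_eq (funext fun z ↦ complexMGF_eqOn (mem_univ z.re))

variable {ν : Measure ℝ} {h : ℝ → ℝ} {x : ℝ}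

theorem integrable_exp_withDensity_ofReal (hh : AEMeasurable h ν)
    (hint : Integrable (fun t ↦ h t * Real.exp (x * t)) ν) :
    Integrable (fun t ↦ Real.exp (x * t)) (ν.withDensity fun t ↦ ENNReal.ofReal (h t)) := by
  rw [integrable_withDensity_iff_integrable_smul₀' hh.ennreal_ofReal (by simp)]
  refine hint.pos_part.congr (.of_forall fun t ↦ ?_)
  simp [ENNReal.toReal_ofReal', max_mul_of_nonneg _ _ (Real.exp_pos _).le]

theorem mgf_id_withDensity_ofReal (hh : AEMeasurable h ν) (x : ℝ) :
    mgf id (ν.withDensity fun t ↦ ENNReal.ofReal (h t)) x =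
      ∫ t, max (h t) 0 * Real.exp (x * t) ∂ν := by
  rw [mgf, integral_withDensity_eq_integral_toReal_smul₀ hh.ennreal_ofReal (by simp)]
  simp [ENNReal.toReal_ofReal']

-- The positive and negative parts of `h` are densities of measures with the same mgf near `x₀`.
theorem ae_eq_zero_of_integral_mul_exp_eventually_eq_zero [SigmaFinite ν] {x₀ : ℝ}
    (hint : ∀ x, Integrable (fun t ↦ h t * Real.exp (x * t)) ν)
    (hzero : ∀ᶠ x in 𝓝 x₀, ∫ t, h t * Real.exp (x * t) ∂ν = 0) : h =ᵐ[ν] 0 := by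
  have hh : AEMeasurable h ν := by simpa using (hint 0).aemeasurable
  have hh_neg : AEMeasurable (fun t ↦ -h t) ν := hh.neg
  have hint_neg (x : ℝ) : Integrable (fun t ↦ -h t * Real.exp (x * t)) ν :=
    (hint x).neg.congr (.of_forall fun _ ↦ (neg_mul _ _).symm)
  have measures_eq : (ν.withDensity fun t ↦ ENNReal.ofReal (h t)) =
      ν.withDensity fun t ↦ ENNReal.ofReal (-h t) := by
    refine measure_eq_of_mgf_id_eventuallyEq (x₀ := x₀)
      (fun x ↦ integrable_exp_withDensity_ofReal hh (hint x))
      (fun x ↦ integrable_exp_withDensity_ofReal hh_neg (hint_neg x)) ?_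
    filter_upwards [hzero] with x hx
    have pos_sub_neg : ∫ t, max (h t) 0 * Real.exp (x * t) ∂ν
        - ∫ t, max (-h t) 0 * Real.exp (x * t) ∂ν = 0 := by
      rw [integral_eq_integral_pos_part_sub_integral_neg_part (hint x)] at hx
      simpa [max_mul_of_nonneg, Real.exp_nonneg] using hx
    rw [mgf_id_withDensity_ofReal hh, mgf_id_withDensity_ofReal hh_neg]
    exact sub_eq_zero.mp pos_sub_neg
  filter_upwards [(withDensity_eq_iff_of_sigmaFinite hh.ennreal_ofReal
    hh_neg.ennreal_ofReal).mp measures_eq] with t ht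
  have pos_eq_neg : max (h t) 0 = max (-h t) 0 := by
    simpa only [ENNReal.toReal_ofReal'] using congrArg ENNReal.toReal ht
  rw [Pi.zero_apply, ← max_zero_sub_max_neg_zero_eq_self (h t), pos_eq_neg, sub_self]

end LaplaceUniqueness

section GaussianIntegrability

/-- `F` is integrable against every centred Gaussian weight. This class contains the bounded
measurable functions, is stable under multiplication by functions of exponential growth, and is
where the Gaussian transforms below converge and can be differentiated under the integral. -/
def GaussianIntegrable (F : ℝ → ℝ) : Prop :=
  ∀ c : ℝ, 0 < c → Integrable fun t ↦ F t * Real.exp (-c * t ^ 2)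

variable {F G w : ℝ → ℝ}

theorem GaussianIntegrable.of_bounded (hF : AEStronglyMeasurable F) {C : ℝ}
    (hC : ∀ᵐ t, |F t| ≤ C) : GaussianIntegrable F := fun _ hc ↦
  (integrable_exp_neg_mul_sq hc).bdd_mul hF hC

theorem GaussianIntegrable.sub (hF : GaussianIntegrable F) (hG : GaussianIntegrable G) :
    GaussianIntegrable fun t ↦ F t - G t := fun c hc ↦
  ((hF c hc).sub (hG c hc)).congr (.of_forall fun _ ↦ (sub_mul _ _ _).symm)

theorem GaussianIntegrable.aestronglyMeasurable (hF : GaussianIntegrable F) :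
    AEStronglyMeasurable F := by
  refine ((hF 1 one_pos).aestronglyMeasurable.mul
    (by fun_prop : Continuous fun t : ℝ ↦ Real.exp (t ^ 2)).aestronglyMeasurable).congr
    (.of_forall fun t ↦ ?_)
  simp [mul_assoc, ← Real.exp_add]

theorem exp_mul_abs_mul_exp_neg_mul_sq_le {c : ℝ} (hc : 0 < c) (a t : ℝ) :
    Real.exp (a * |t|) * Real.exp (-c * t ^ 2) ≤
      Real.exp (a ^ 2 / (2 * c)) * Real.exp (-(c / 2) * t ^ 2) := by
  rw [← Real.exp_add, ← Real.exp_add, Real.exp_le_exp, ← sq_abs t]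
  have complete_square : a ^ 2 / (2 * c) - a * |t| + c / 2 * |t| ^ 2 =
      (a - c * |t|) ^ 2 / (2 * c) := by
    field_simp
    ring
  have : 0 ≤ (a - c * |t|) ^ 2 / (2 * c) := by positivity
  linarith

theorem GaussianIntegrable.mul_of_abs_le_exp (hF : GaussianIntegrable F) (hw : Continuous w)
    {C a : ℝ} (hwC : ∀ t, |w t| ≤ C * Real.exp (a * |t|)) :
    GaussianIntegrable fun t ↦ w t * F t := by
  intro c hc
  refine ((hF (c / 2) (half_pos hc)).norm.const_mul (C * Real.exp (a ^ 2 / (2 * c)))).mono'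
    ((hw.aestronglyMeasurable.mul hF.aestronglyMeasurable).mul
      (by fun_prop : Continuous fun t : ℝ ↦ Real.exp (-c * t ^ 2)).aestronglyMeasurable)
    (.of_forall fun t ↦ ?_)
  have hC : 0 ≤ C := by simpa using (abs_nonneg _).trans (hwC 0)
  simp only [norm_mul, Real.norm_eq_abs, Real.abs_exp]
  calc |w t| * |F t| * Real.exp (-c * t ^ 2)
      ≤ C * Real.exp (a * |t|) * |F t| * Real.exp (-c * t ^ 2) := by gcongr; exact hwC t
    _ = C * |F t| * (Real.exp (a * |t|) * Real.exp (-c * t ^ 2)) := by ring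
    _ ≤ C * |F t| * (Real.exp (a ^ 2 / (2 * c)) * Real.exp (-(c / 2) * t ^ 2)) := by
        gcongr C * |F t| * ?_
        exact exp_mul_abs_mul_exp_neg_mul_sq_le hc a t
    _ = C * Real.exp (a ^ 2 / (2 * c)) * (|F t| * Real.exp (-(c / 2) * t ^ 2)) := by ring

theorem GaussianIntegrable.id_mul (hF : GaussianIntegrable F) :
    GaussianIntegrable fun t ↦ t * F t :=
  hF.mul_of_abs_le_exp (C := 1) (a := 1) continuous_id fun t ↦ by
    simpa using (le_add_of_nonneg_right zero_le_one).trans (Real.add_one_le_exp |t|)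

theorem GaussianIntegrable.integrable_mul_exp (hF : GaussianIntegrable F) (x : ℝ) {y : ℝ}
    (hy : 0 < y) : Integrable fun t ↦ F t * Real.exp (x * t - y * t ^ 2) := by
  have hexp (t : ℝ) : |Real.exp (x * t)| ≤ 1 * Real.exp (|x| * |t|) := by
    rw [Real.abs_exp, one_mul, ← abs_mul]
    gcongr
    exact le_abs_self _
  refine (hF.mul_of_abs_le_exp (by fun_prop) hexp y hy).congr (.of_forall fun t ↦ ?_)
  simp only [sub_eq_add_neg, Real.exp_add, neg_mul]
  ring

end GaussianIntegrability

section GaussianLaplace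

/-- The two-parameter exponential family transform `(x, y) ↦ ∫ F(t) exp(x t - y t²) dt`; at fixed
`y` it is the Laplace transform of `F` weighted by a Gaussian. -/
noncomputable def gaussianLaplace (F : ℝ → ℝ) (p : ℝ × ℝ) : ℝ :=
  ∫ t, F t * Real.exp (p.1 * t - p.2 * t ^ 2)

variable {F G : ℝ → ℝ}

theorem hasFDerivAt_mul_exp_quadratic (c t : ℝ) (p : ℝ × ℝ) :
    HasFDerivAt (fun q : ℝ × ℝ ↦ c * Real.exp (q.1 * t - q.2 * t ^ 2))
      ((c * Real.exp (p.1 * t - p.2 * t ^ 2)) •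
        (t • ContinuousLinearMap.fst ℝ ℝ ℝ - t ^ 2 • ContinuousLinearMap.snd ℝ ℝ ℝ)) p := by
  have exponent : HasFDerivAt (fun q : ℝ × ℝ ↦ q.1 * t - q.2 * t ^ 2)
      (t • ContinuousLinearMap.fst ℝ ℝ ℝ - t ^ 2 • ContinuousLinearMap.snd ℝ ℝ ℝ) p :=
    (hasFDerivAt_fst.mul_const t).sub (hasFDerivAt_snd.mul_const (t ^ 2))
  simpa only [smul_smul] using exponent.exp.const_mul c

theorem norm_smul_fst_sub_smul_snd_le (a b : ℝ) :
    ‖a • ContinuousLinearMap.fst ℝ ℝ ℝ - b • ContinuousLinearMap.snd ℝ ℝ ℝ‖ ≤ |a| + |b| := by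
  refine (norm_sub_le _ _).trans (add_le_add ?_ ?_) <;> rw [norm_smul, Real.norm_eq_abs]
  · exact mul_le_of_le_one_right (abs_nonneg a) (ContinuousLinearMap.norm_fst_le ..)
  · exact mul_le_of_le_one_right (abs_nonneg b) (ContinuousLinearMap.norm_snd_le ..)

theorem abs_add_sq_le_two_mul_exp_abs (t : ℝ) : |t| + t ^ 2 ≤ 2 * Real.exp |t| := by
  have := Real.quadratic_le_exp_of_nonneg (abs_nonneg t)
  rw [sq_abs] at this
  linarith [abs_nonneg t]

theorem GaussianIntegrable.integrable_abs_mul_exp_mul_abs_add_sq (hF : GaussianIntegrable F)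
    (X : ℝ) {y : ℝ} (hy : 0 < y) :
    Integrable fun t ↦ |F t| * Real.exp (X * |t| - y * t ^ 2) * (|t| + t ^ 2) := by
  have growth (t : ℝ) :
      |(|t| + t ^ 2) * Real.exp (X * |t|)| ≤ 2 * Real.exp ((X + 1) * |t|) := by
    rw [abs_of_nonneg (by positivity), add_one_mul, add_comm (X * |t|), Real.exp_add, ← mul_assoc]
    gcongr
    exact abs_add_sq_le_two_mul_exp_abs t
  refine (hF.mul_of_abs_le_exp (by fun_prop) growth y hy).norm.congr (.of_forall fun t ↦ ?_)
  have : 0 ≤ |t| + t ^ 2 := by positivity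
  simp only [norm_mul, Real.norm_eq_abs, Real.abs_exp, abs_of_nonneg this, sub_eq_add_neg,
    Real.exp_add, neg_mul]
  ring

theorem integral_mul_exp_smul_fst_sub_snd (hF : GaussianIntegrable F) {p : ℝ × ℝ}
    (hp : 0 < p.2) :
    ∫ t, (F t * Real.exp (p.1 * t - p.2 * t ^ 2)) •
        (t • ContinuousLinearMap.fst ℝ ℝ ℝ - t ^ 2 • ContinuousLinearMap.snd ℝ ℝ ℝ) =
      gaussianLaplace (fun t ↦ t * F t) p • ContinuousLinearMap.fst ℝ ℝ ℝ -
        gaussianLaplace (fun t ↦ t * (t * F t)) p • ContinuousLinearMap.snd ℝ ℝ ℝ := by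
  have fst_integrable := hF.id_mul.integrable_mul_exp p.1 hp
  have snd_integrable := hF.id_mul.id_mul.integrable_mul_exp p.1 hp
  calc
    _ = ∫ t, ((t * F t * Real.exp (p.1 * t - p.2 * t ^ 2)) • ContinuousLinearMap.fst ℝ ℝ ℝ -
          (t * (t * F t) * Real.exp (p.1 * t - p.2 * t ^ 2)) • ContinuousLinearMap.snd ℝ ℝ ℝ) := by
        refine integral_congr_ae (.of_forall fun t ↦ ?_)
        simp only [smul_sub, smul_smul]
        ring_nf
    _ = _ := (integral_sub (fst_integrable.smul_const _) (snd_integrable.smul_const _)).trans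
        (congrArg₂ _ (integral_smul_const _ _) (integral_smul_const _ _))

theorem hasFDerivAt_gaussianLaplace (hF : GaussianIntegrable F) {p : ℝ × ℝ} (hp : 0 < p.2) :
    HasFDerivAt (gaussianLaplace F)
      (gaussianLaplace (fun t ↦ t * F t) p • ContinuousLinearMap.fst ℝ ℝ ℝ -
        gaussianLaplace (fun t ↦ t * (t * F t)) p • ContinuousLinearMap.snd ℝ ℝ ℝ) p := by
  have near_p : ∀ᶠ q : ℝ × ℝ in 𝓝 p, |q.1| < |p.1| + 1 ∧ p.2 / 2 < q.2 :=
    ((by fun_prop : Continuous fun q : ℝ × ℝ ↦ |q.1|).continuousAt.eventually_lt_const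
      (lt_add_one _)).and (continuous_snd.continuousAt.eventually_const_lt (half_lt_self hp))
  have measurable_mul_exp (q : ℝ × ℝ) :
      AEStronglyMeasurable fun t ↦ F t * Real.exp (q.1 * t - q.2 * t ^ 2) :=
    hF.aestronglyMeasurable.mul (by fun_prop : Continuous _).aestronglyMeasurable
  rw [← integral_mul_exp_smul_fst_sub_snd hF hp]
  refine hasFDerivAt_integral_of_dominated_of_fderiv_le near_p
    (.of_forall measurable_mul_exp) (hF.integrable_mul_exp p.1 hp)
    ((measurable_mul_exp p).smul (by fun_prop : Continuous fun t : ℝ ↦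
      t • ContinuousLinearMap.fst ℝ ℝ ℝ - t ^ 2 • ContinuousLinearMap.snd ℝ ℝ ℝ
      ).aestronglyMeasurable)
    (.of_forall fun t q ⟨hq₁, hq₂⟩ ↦ ?_)
    (hF.integrable_abs_mul_exp_mul_abs_add_sq (|p.1| + 1) (half_pos hp))
    (.of_forall fun t q _ ↦ hasFDerivAt_mul_exp_quadratic (F t) t q)
  rw [norm_smul, norm_mul, Real.norm_eq_abs, Real.norm_eq_abs, Real.abs_exp]
  have exponent_le : q.1 * t - q.2 * t ^ 2 ≤ (|p.1| + 1) * |t| - p.2 / 2 * t ^ 2 := by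
    have : q.1 * t ≤ |q.1| * |t| := (le_abs_self _).trans_eq (abs_mul _ _)
    have : |q.1| * |t| ≤ (|p.1| + 1) * |t| := by gcongr
    have : p.2 / 2 * t ^ 2 ≤ q.2 * t ^ 2 := by gcongr
    linarith
  have direction_le := norm_smul_fst_sub_smul_snd_le t (t ^ 2)
  rw [abs_sq] at direction_le
  gcongr

theorem gaussianLaplace_sub (hF : GaussianIntegrable F) (hG : GaussianIntegrable G) {p : ℝ × ℝ}
    (hp : 0 < p.2) : gaussianLaplace (fun t ↦ F t - G t) p =
      gaussianLaplace F p - gaussianLaplace G p := by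
  simp only [gaussianLaplace, sub_mul]
  exact integral_sub (hF.integrable_mul_exp _ hp) (hG.integrable_mul_exp _ hp)

theorem ae_eq_of_gaussianLaplace_eventuallyEq (hF : GaussianIntegrable F)
    (hG : GaussianIntegrable G) {x₀ y : ℝ} (hy : 0 < y)
    (h : ∀ᶠ x in 𝓝 x₀, gaussianLaplace F (x, y) = gaussianLaplace G (x, y)) :
    F =ᵐ[volume] G := by
  have weighted (x t : ℝ) : (F t - G t) * Real.exp (-y * t ^ 2) * Real.exp (x * t) =
      (F t - G t) * Real.exp (x * t - y * t ^ 2) := by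
    rw [mul_assoc, ← Real.exp_add]
    ring_nf
  have weighted_zero : (fun t ↦ (F t - G t) * Real.exp (-y * t ^ 2)) =ᵐ[volume] 0 := by
    refine ae_eq_zero_of_integral_mul_exp_eventually_eq_zero (x₀ := x₀) (fun x ↦ ?_) ?_
    · simpa only [weighted] using (hF.sub hG).integrable_mul_exp x hy
    · filter_upwards [h] with x hx
      simp only [weighted]
      exact (gaussianLaplace_sub hF hG hy).trans (sub_eq_zero.mpr hx)
  filter_upwards [weighted_zero] with t ht
  exact sub_eq_zero.mp ((mul_eq_zero_iff_right (Real.exp_pos _).ne').mp ht)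

end GaussianLaplace

section Response

/-- The paper's outcome probability generated by `(F, β₀, β₁)` at covariates `(z₁, z₂)`, without its
factor `1 / z₂`. -/
noncomputable def probitResponse (F : ℝ → ℝ) (β₀ β₁ z₁ z₂ : ℝ) : ℝ :=
  ∫ t, F t * stdNormalPDF (t / z₂ - β₀ - β₁ * z₁)

variable {F G : ℝ → ℝ} {β₀ β₁ z₁ z₂ : ℝ}

theorem stdNormalPDF_pos (t : ℝ) : 0 < stdNormalPDF t := by
  unfold stdNormalPDF
  positivity

theorem hasDerivAt_stdNormalPDF (t : ℝ) : HasDerivAt stdNormalPDF (-t * stdNormalPDF t) t := by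
  have exponent : HasDerivAt (fun t : ℝ ↦ -t ^ 2 / 2) (-t) t :=
    ((hasDerivAt_pow 2 t).neg.div_const 2).congr_deriv (by
      simp only [Nat.cast_ofNat, Nat.add_one_sub_one, pow_one]
      ring)
  refine (exponent.exp.const_mul (Real.sqrt (2 * Real.pi))⁻¹).congr_deriv ?_
  rw [stdNormalPDF]
  ring

theorem probitResponse_eq_gaussianLaplace (F : ℝ → ℝ) (β₀ β₁ z₁ z₂ : ℝ) :
    probitResponse F β₀ β₁ z₁ z₂ = stdNormalPDF (β₀ + β₁ * z₁) *
      gaussianLaplace F ((β₀ + β₁ * z₁) * z₂⁻¹, (z₂⁻¹) ^ 2 / 2) := by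
  rw [probitResponse, gaussianLaplace, ← integral_const_mul]
  refine integral_congr_ae (.of_forall fun t ↦ ?_)
  simp only [stdNormalPDF]
  rw [mul_mul_mul_comm, mul_comm _ (F t), mul_assoc (F t), mul_assoc, ← Real.exp_add]
  ring_nf

theorem hasDerivAt_probitResponse_fst (hF : GaussianIntegrable F) (β₀ β₁ z₁ : ℝ) (hz₂ : z₂ ≠ 0) :
    HasDerivAt (fun z ↦ probitResponse F β₀ β₁ z z₂)
      (β₁ * (z₂⁻¹ * probitResponse (fun t ↦ t * F t) β₀ β₁ z₁ z₂ -
        (β₀ + β₁ * z₁) * probitResponse F β₀ β₁ z₁ z₂)) z₁ := by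
  simp only [probitResponse_eq_gaussianLaplace]
  have index : HasDerivAt (fun z ↦ β₀ + β₁ * z) β₁ z₁ := by
    simpa using ((hasDerivAt_id z₁).const_mul β₁).const_add β₀
  have laplace := (hasFDerivAt_gaussianLaplace hF
    (p := ((β₀ + β₁ * z₁) * z₂⁻¹, (z₂⁻¹) ^ 2 / 2)) (by positivity)).comp_hasDerivAt z₁
      ((index.mul_const z₂⁻¹).prodMk (hasDerivAt_const z₁ ((z₂⁻¹) ^ 2 / 2)))
  refine (((hasDerivAt_stdNormalPDF _).comp z₁ index).mul laplace).congr_deriv ?_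
  simp only [Function.comp_apply, sub_apply, smul_apply, ContinuousLinearMap.coe_fst',
    ContinuousLinearMap.coe_snd', smul_eq_mul, mul_zero, sub_zero]
  ring

theorem hasDerivAt_probitResponse_snd (hF : GaussianIntegrable F) (β₀ β₁ z₁ : ℝ) (hz₂ : z₂ ≠ 0) :
    HasDerivAt (fun z ↦ probitResponse F β₀ β₁ z₁ z)
      (-(z₂⁻¹) ^ 2 * ((β₀ + β₁ * z₁) * probitResponse (fun t ↦ t * F t) β₀ β₁ z₁ z₂ -
        z₂⁻¹ * probitResponse (fun t ↦ t * (t * F t)) β₀ β₁ z₁ z₂)) z₂ := by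
  simp only [probitResponse_eq_gaussianLaplace]
  have inverse : HasDerivAt (fun z : ℝ ↦ z⁻¹) (-(z₂⁻¹) ^ 2) z₂ :=
    (hasDerivAt_inv hz₂).congr_deriv (by rw [inv_pow])
  have laplace := (hasFDerivAt_gaussianLaplace hF
    (p := ((β₀ + β₁ * z₁) * z₂⁻¹, (z₂⁻¹) ^ 2 / 2)) (by positivity)).comp_hasDerivAt z₂
      ((inverse.const_mul (β₀ + β₁ * z₁)).prodMk ((inverse.pow 2).div_const 2))
  refine (laplace.const_mul (stdNormalPDF (β₀ + β₁ * z₁))).congr_deriv ?_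
  simp only [Nat.cast_ofNat, Nat.add_one_sub_one, pow_one, sub_apply, smul_apply,
    ContinuousLinearMap.coe_fst', ContinuousLinearMap.coe_snd', smul_eq_mul]
  ring

theorem deriv_probitResponse_fst (hF : GaussianIntegrable F) (β₀ β₁ : ℝ) (hz₂ : z₂ ≠ 0) :
    deriv (fun z ↦ probitResponse F β₀ β₁ z z₂) = fun z ↦
      β₁ * (z₂⁻¹ * probitResponse (fun t ↦ t * F t) β₀ β₁ z z₂ -
        (β₀ + β₁ * z) * probitResponse F β₀ β₁ z z₂) :=
  funext fun z ↦ (hasDerivAt_probitResponse_fst hF β₀ β₁ z hz₂).deriv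

theorem hasDerivAt_deriv_probitResponse_fst (hF : GaussianIntegrable F) (β₀ β₁ z₁ : ℝ)
    (hz₂ : z₂ ≠ 0) :
    HasDerivAt (deriv fun z ↦ probitResponse F β₀ β₁ z z₂)
      (β₁ ^ 2 * ((z₂⁻¹) ^ 2 * probitResponse (fun t ↦ t * (t * F t)) β₀ β₁ z₁ z₂ -
        2 * z₂⁻¹ * (β₀ + β₁ * z₁) * probitResponse (fun t ↦ t * F t) β₀ β₁ z₁ z₂ +
        ((β₀ + β₁ * z₁) ^ 2 - 1) * probitResponse F β₀ β₁ z₁ z₂)) z₁ := by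
  rw [deriv_probitResponse_fst hF β₀ β₁ hz₂]
  have index : HasDerivAt (fun z ↦ β₀ + β₁ * z) β₁ z₁ := by
    simpa using ((hasDerivAt_id z₁).const_mul β₁).const_add β₀
  refine ((((hasDerivAt_probitResponse_fst hF.id_mul β₀ β₁ z₁ hz₂).const_mul z₂⁻¹).sub
    (index.mul (hasDerivAt_probitResponse_fst hF β₀ β₁ z₁ hz₂))).const_mul β₁).congr_deriv ?_
  ring

-- The identity `∂²φ + w ∂φ + φ = 0` at `w = t / z₂ - β₀ - β₁ z₁`, integrated against `F`, with
-- `t / z₂ = w + β₀ + β₁ z₁`.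
theorem probitResponse_pde (hF : GaussianIntegrable F) (β₀ z₁ : ℝ) (hβ₁ : β₁ ≠ 0)
    (hz₂ : z₂ ≠ 0) :
    z₂ * deriv (fun z ↦ probitResponse F β₀ β₁ z₁ z) z₂ =
      (β₁⁻¹) ^ 2 * deriv (deriv fun z ↦ probitResponse F β₀ β₁ z z₂) z₁ +
        probitResponse F β₀ β₁ z₁ z₂ +
        (β₀ / β₁ + z₁) * deriv (fun z ↦ probitResponse F β₀ β₁ z z₂) z₁ := by
  rw [(hasDerivAt_probitResponse_snd hF β₀ β₁ z₁ hz₂).deriv,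
    (hasDerivAt_deriv_probitResponse_fst hF β₀ β₁ z₁ hz₂).deriv,
    (hasDerivAt_probitResponse_fst hF β₀ β₁ z₁ hz₂).deriv]
  field_simp
  ring

theorem ae_eq_of_probitResponse_eventuallyEq (hF : GaussianIntegrable F)
    (hG : GaussianIntegrable G) (hβ₁ : β₁ ≠ 0) (hz₂ : z₂ ≠ 0)
    (h : ∀ᶠ z in 𝓝 z₁, probitResponse F β₀ β₁ z z₂ = probitResponse G β₀ β₁ z z₂) :
    F =ᵐ[volume] G := by
  have index_surj (x : ℝ) : (β₀ + β₁ * ((x * z₂ - β₀) / β₁)) * z₂⁻¹ = x := by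
    field_simp
    ring
  have tendsto_z₁ : Tendsto (fun x ↦ (x * z₂ - β₀) / β₁) (𝓝 ((β₀ + β₁ * z₁) * z₂⁻¹)) (𝓝 z₁) := by
    have : Continuous fun x ↦ (x * z₂ - β₀) / β₁ := by fun_prop
    convert this.tendsto ((β₀ + β₁ * z₁) * z₂⁻¹) using 2
    field_simp
    ring
  refine ae_eq_of_gaussianLaplace_eventuallyEq (x₀ := (β₀ + β₁ * z₁) * z₂⁻¹)
    (y := (z₂⁻¹) ^ 2 / 2) hF hG (by positivity) ?_
  filter_upwards [tendsto_z₁.eventually h] with x hx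
  simp only [probitResponse_eq_gaussianLaplace, index_surj] at hx
  exact mul_left_cancel₀ (stdNormalPDF_pos _).ne' hx

end Response

section LinearODE

/-- `f` is affine on `I`: the first alternative excluded by Assumption 4. -/
def IsAffineOn (f : ℝ → ℝ) (I : Set ℝ) : Prop :=
  ∃ K₄ K₃ : ℝ, ∀ z ∈ I, f z = K₄ * z + K₃

/-- `f` is an exponential plus a constant on `I`: the second alternative excluded by
Assumption 4. -/
def IsExpAffineOn (f : ℝ → ℝ) (I : Set ℝ) : Prop :=
  ∃ K₁ K₂ K₃ : ℝ, ∀ z ∈ I, f z = K₁ * Real.exp (K₂ * z) + K₃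

variable {I : Set ℝ} {f f' f'' : ℝ → ℝ}

theorem exists_eq_add_const_of_hasDerivAt {g : ℝ → ℝ} (hI : IsOpen I) (hI' : IsPreconnected I)
    (hf : ∀ z ∈ I, HasDerivAt f (f' z) z) (hg : ∀ z ∈ I, HasDerivAt g (f' z) z) :
    ∃ K, ∀ z ∈ I, f z = g z + K :=
  hI.exists_eq_add_of_deriv_eq hI' (fun z hz ↦ (hf z hz).differentiableAt.differentiableWithinAt)
    (fun z hz ↦ (hg z hz).differentiableAt.differentiableWithinAt)
    (fun z hz ↦ (hf z hz).deriv.trans (hg z hz).deriv.symm)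

theorem hasDerivAt_exp_const_mul (k z : ℝ) :
    HasDerivAt (fun z ↦ Real.exp (k * z)) (k * Real.exp (k * z)) z := by
  simpa [mul_comm] using ((hasDerivAt_id z).const_mul k).exp

theorem exists_eq_const_mul_exp_of_hasDerivAt {k : ℝ} (hI : IsOpen I) (hI' : IsPreconnected I)
    (hf : ∀ z ∈ I, HasDerivAt f (k * f z) z) : ∃ K, ∀ z ∈ I, f z = K * Real.exp (k * z) := by
  have quotient_deriv : ∀ z ∈ I, HasDerivAt (fun z ↦ f z * Real.exp (-k * z)) 0 z := fun z hz ↦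
    ((hf z hz).mul (hasDerivAt_exp_const_mul (-k) z)).congr_deriv (by ring)
  obtain ⟨K, hK⟩ := exists_eq_add_const_of_hasDerivAt hI hI' quotient_deriv
    fun z _ ↦ hasDerivAt_const z 0
  refine ⟨K, fun z hz ↦ ?_⟩
  rw [← zero_add K, ← hK z hz, mul_assoc, ← Real.exp_add]
  simp

theorem isAffineOn_or_isExpAffineOn_of_deriv_deriv_eq_const_mul {k : ℝ} (hI : IsOpen I)
    (hI' : IsPreconnected I) (hf : ∀ z ∈ I, HasDerivAt f (f' z) z)
    (hf' : ∀ z ∈ I, HasDerivAt f' (k * f' z) z) : IsAffineOn f I ∨ IsExpAffineOn f I := by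
  obtain ⟨K, hK⟩ := exists_eq_const_mul_exp_of_hasDerivAt hI hI' hf'
  rcases eq_or_ne k 0 with rfl | hk
  · left
    exact ⟨K, exists_eq_add_const_of_hasDerivAt hI hI' hf fun z hz ↦
      ((hasDerivAt_id z).const_mul K).congr_deriv (by simp [hK z hz])⟩
  · right
    exact ⟨K / k, k, exists_eq_add_const_of_hasDerivAt hI hI' hf fun z hz ↦
      ((hasDerivAt_exp_const_mul k z).const_mul (K / k)).congr_deriv (by
        rw [hK z hz]
        field_simp)⟩

theorem isAffineOn_or_isExpAffineOn_of_linear_ode {A B : ℝ} (hI : IsOpen I)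
    (hI' : IsPreconnected I) (hf : ∀ z ∈ I, HasDerivAt f (f' z) z)
    (hf' : ∀ z ∈ I, HasDerivAt f' (f'' z) z) (hAB : A ≠ 0 ∨ B ≠ 0)
    (ode : ∀ z ∈ I, A * f'' z + B * f' z = 0) : IsAffineOn f I ∨ IsExpAffineOn f I := by
  rcases eq_or_ne A 0 with rfl | hA
  · have hB : B ≠ 0 := hAB.resolve_left (· rfl)
    have f'_eq_zero (z : ℝ) (hz : z ∈ I) : f' z = 0 := by simpa [hB] using ode z hz
    obtain ⟨K, hK⟩ := exists_eq_add_const_of_hasDerivAt hI hI' hf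
      fun z hz ↦ (hasDerivAt_const z 0).congr_deriv (f'_eq_zero z hz).symm
    exact .inl ⟨0, K, fun z hz ↦ by rw [hK z hz, zero_mul]⟩
  · refine isAffineOn_or_isExpAffineOn_of_deriv_deriv_eq_const_mul (k := -B / A) hI hI' hf
      fun z hz ↦ (hf' z hz).congr_deriv ?_
    field_simp
    linear_combination ode z hz

end LinearODE

section Identification

variable {F G : ℝ → ℝ} {β₀ β₁ γ₀ γ₁ z₂ : ℝ} {I : Set ℝ}

theorem probitResponse_ode_of_eventuallyEq (hF : GaussianIntegrable F) (hG : GaussianIntegrable G)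
    (hβ₁ : β₁ ≠ 0) (hγ₁ : γ₁ ≠ 0) (hz₂ : z₂ ≠ 0) {z₁ : ℝ}
    (h_fst : (fun z ↦ probitResponse F β₀ β₁ z z₂) =ᶠ[𝓝 z₁] fun z ↦ probitResponse G γ₀ γ₁ z z₂)
    (h_snd : (fun z ↦ probitResponse F β₀ β₁ z₁ z) =ᶠ[𝓝 z₂] fun z ↦ probitResponse G γ₀ γ₁ z₁ z) :
    ((β₁⁻¹) ^ 2 - (γ₁⁻¹) ^ 2) * deriv (deriv fun z ↦ probitResponse F β₀ β₁ z z₂) z₁ +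
      (β₀ / β₁ - γ₀ / γ₁) * deriv (fun z ↦ probitResponse F β₀ β₁ z z₂) z₁ = 0 := by
  have pde_F := probitResponse_pde hF β₀ z₁ hβ₁ hz₂
  have pde_G := probitResponse_pde hG γ₀ z₁ hγ₁ hz₂
  rw [← h_snd.deriv_eq, ← h_fst.deriv.deriv_eq, ← h_fst.deriv_eq, ← h_fst.eq_of_nhds] at pde_G
  linear_combination pde_G - pde_F

theorem eq_and_eq_of_sq_inv_eq_of_div_eq (hsign : 0 < β₁ * γ₁)
    (hsq : (β₁⁻¹) ^ 2 = (γ₁⁻¹) ^ 2) (hdiv : β₀ / β₁ = γ₀ / γ₁) : β₀ = γ₀ ∧ β₁ = γ₁ := by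
  have slopes_eq : β₁ = γ₁ := by
    rcases sq_eq_sq_iff_eq_or_eq_neg.mp hsq with h | h
    · exact inv_injective h
    · rw [← inv_neg, inv_inj] at h
      rw [h] at hsign
      nlinarith [sq_nonneg γ₁]
  have hγ₁ : γ₁ ≠ 0 := right_ne_zero_of_mul hsign.ne'
  rw [slopes_eq, div_left_inj' hγ₁] at hdiv
  exact ⟨hdiv, slopes_eq⟩

theorem coefficients_eq_of_probitResponse_eventuallyEq (hF : GaussianIntegrable F)
    (hG : GaussianIntegrable G) (hsign : 0 < β₁ * γ₁) (hI : IsOpen I) (hI' : IsPreconnected I)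
    (hz₂ : z₂ ≠ 0)
    (heq : ∀ z₁ ∈ I, ∀ᶠ z in 𝓝 z₂, probitResponse F β₀ β₁ z₁ z = probitResponse G γ₀ γ₁ z₁ z)
    (hna : ¬ IsAffineOn (fun z₁ ↦ probitResponse F β₀ β₁ z₁ z₂) I)
    (hne : ¬ IsExpAffineOn (fun z₁ ↦ probitResponse F β₀ β₁ z₁ z₂) I) : β₀ = γ₀ ∧ β₁ = γ₁ := by
  have ode (z₁ : ℝ) (hz₁ : z₁ ∈ I) := probitResponse_ode_of_eventuallyEq hF hG
    (left_ne_zero_of_mul hsign.ne') (right_ne_zero_of_mul hsign.ne') hz₂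
    (by filter_upwards [hI.mem_nhds hz₁] with z hz using (heq z hz).self_of_nhds) (heq z₁ hz₁)
  have coefficients_zero : (β₁⁻¹) ^ 2 - (γ₁⁻¹) ^ 2 = 0 ∧ β₀ / β₁ - γ₀ / γ₁ = 0 := by
    by_contra not_both
    refine (isAffineOn_or_isExpAffineOn_of_linear_ode hI hI' (fun z _ ↦ ?_) (fun z _ ↦ ?_)
      (not_and_or.mp not_both) ode).elim hna hne
    · exact (hasDerivAt_probitResponse_fst hF β₀ β₁ z hz₂).differentiableAt.hasDerivAt
    · exact (hasDerivAt_deriv_probitResponse_fst hF β₀ β₁ z hz₂).differentiableAt.hasDerivAt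
  exact eq_and_eq_of_sq_inv_eq_of_div_eq hsign (sub_eq_zero.mp coefficients_zero.1)
    (sub_eq_zero.mp coefficients_zero.2)

theorem scalar_identification_general (hF : GaussianIntegrable F) (hG : GaussianIntegrable G)
    (hsign : 0 < β₁ * γ₁) (hI : IsOpen I) (hI' : IsPreconnected I) (hz₂ : z₂ ≠ 0)
    (heq : ∀ z₁ ∈ I, ∀ᶠ z in 𝓝 z₂, probitResponse F β₀ β₁ z₁ z = probitResponse G γ₀ γ₁ z₁ z)
    (hna : ¬ IsAffineOn (fun z₁ ↦ probitResponse F β₀ β₁ z₁ z₂) I)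
    (hne : ¬ IsExpAffineOn (fun z₁ ↦ probitResponse F β₀ β₁ z₁ z₂) I) :
    β₀ = γ₀ ∧ β₁ = γ₁ ∧ F =ᵐ[volume] G := by
  obtain ⟨rfl, rfl⟩ :=
    coefficients_eq_of_probitResponse_eventuallyEq hF hG hsign hI hI' hz₂ heq hna hne
  obtain ⟨z₁, hz₁⟩ : I.Nonempty := by
    by_contra! hI_empty
    exact hna ⟨0, 0, by simp [hI_empty]⟩
  refine ⟨rfl, rfl, ae_eq_of_probitResponse_eventuallyEq (β₀ := β₀) (z₁ := z₁) hF hG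
    (left_ne_zero_of_mul hsign.ne') hz₂ ?_⟩
  filter_upwards [hI.mem_nhds hz₁] with z hz using (heq z hz).self_of_nhds

theorem probitResponse_eventuallyEq_of_isOpen {U : Set (ℝ × ℝ)} (hU : IsOpen U)
    (hU0 : ∀ p ∈ U, p.2 ≠ 0)
    (heq : ∀ p ∈ U, 1 / p.2 * probitResponse F β₀ β₁ p.1 p.2 =
      1 / p.2 * probitResponse G γ₀ γ₁ p.1 p.2) {z₁ : ℝ} (hz : (z₁, z₂) ∈ U) :
    ∀ᶠ z in 𝓝 z₂, probitResponse F β₀ β₁ z₁ z = probitResponse G γ₀ γ₁ z₁ z := by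
  filter_upwards [(Continuous.prodMk_right z₁).continuousAt.preimage_mem_nhds (hU.mem_nhds hz)]
    with z hzU
  exact mul_left_cancel₀ (one_div_ne_zero (hU0 _ hzU)) (heq _ hzU)

end Identification

/-- the scalar identification theorem at the heart of
Proposition 2. If two structures `(F, β₀, β₁)` and `(G, γ₀, γ₁)` with positive
slopes generate the same choice probabilities on a nonempty open set of
covariate values, and the generated probability is (on some horizontal open
segment) neither affine nor exponential-affine in `z₁`, then the coefficients
coincide and `F = G` almost everywhere. -/
theorem scalar_identification
    (F G : ℝ → ℝ) (hFm : Measurable F) (hGm : Measurable G)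
    (hFb : ∃ C : ℝ, ∀ t, |F t| ≤ C) (hGb : ∃ C : ℝ, ∀ t, |G t| ≤ C)
    (β₀ β₁ γ₀ γ₁ : ℝ) (hβ₁ : 0 < β₁) (hγ₁ : 0 < γ₁)
    (U : Set (ℝ × ℝ)) (hUopen : IsOpen U) (hUne : U.Nonempty)
    (hU0 : ∀ p ∈ U, p.2 ≠ 0)
    (heq : ∀ p ∈ U,
      (1 / p.2) * ∫ t : ℝ, F t * stdNormalPDF (t / p.2 - β₀ - β₁ * p.1) =
        (1 / p.2) * ∫ t : ℝ, G t * stdNormalPDF (t / p.2 - γ₀ - γ₁ * p.1))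
    (hnl : ∃ z₂ : ℝ, z₂ ≠ 0 ∧ ∃ a b : ℝ, a < b ∧
      (Set.Ioo a b ×ˢ ({z₂} : Set ℝ)) ⊆ U ∧
      ¬ (∃ K₄ K₃ : ℝ, ∀ z₁ ∈ Set.Ioo a b,
          (∫ t : ℝ, F t * stdNormalPDF (t / z₂ - β₀ - β₁ * z₁)) = K₄ * z₁ + K₃) ∧
      ¬ (∃ K₁ K₂ K₃ : ℝ, ∀ z₁ ∈ Set.Ioo a b,
          (∫ t : ℝ, F t * stdNormalPDF (t / z₂ - β₀ - β₁ * z₁)) =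
            K₁ * Real.exp (K₂ * z₁) + K₃)) :
    β₀ = γ₀ ∧ β₁ = γ₁ ∧ F =ᵐ[volume] G := by
  obtain ⟨CF, hCF⟩ := hFb
  obtain ⟨CG, hCG⟩ := hGb
  obtain ⟨z₂, hz₂, a, b, -, hIU, hna, hne⟩ := hnl
  exact scalar_identification_general (.of_bounded hFm.aestronglyMeasurable (.of_forall hCF))
    (.of_bounded hGm.aestronglyMeasurable (.of_forall hCG)) (mul_pos hβ₁ hγ₁) isOpen_Ioo
    isPreconnected_Ioo hz₂
    (fun z₁ hz₁ ↦ probitResponse_eventuallyEq_of_isOpen hUopen hU0 heq (hIU ⟨hz₁, rfl⟩)) hna hne
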